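/- Let A, φ ∈ ℝ, Ω > 0, τ₀ > 0, and define g(t) = A cos(Ω t + φ). Then for every t ∈ ℝ, lim_{ε→0⁺} ∫₀^∞ e^{−ετ} log(τ/τ₀) (g′(t−τ) − g′(t+τ)) dτ = −2 g(t) (log(Ω τ₀) + γ), where γ is the Euler–Mascheroni constant and each integral on the left converges absolutely for every ε > 0. -/

import Mathlib

open MeasureTheory Set Filter

/-!
The derivative difference `g'(t-τ) - g'(t+τ)` equals `2 g(t) Ω sin(Ω τ)`, so the regularized
integral is `2 g(t) Ω` times the imaginary part of the Laplace transform of `log(τ/τ₀)` at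
`z = ε - iΩ`. Differentiating `∫ τ^(s-1) exp(-zτ) dτ = z^(-s) Γ(s)` with respect to `s` at `s = 1`,
where `Γ'(1) = -γ`, shows that this transform is `-(γ + log(z τ₀)) / z` on the half-plane
`0 < re z`; the Gamma integral passes from real to complex `z` by the identity theorem, both sides
being holomorphic. The transform extends continuously to `z = -iΩ`, where the principal logarithm
of `z τ₀` is `log(Ω τ₀) - iπ/2`.
-/

section HalfPlane

open Complex
open scoped Topology

variable {E : Type*} [NormedAddCommGroup E] [NormedSpace ℂ E]

theorem eqOn_re_pos_of_eq_ofReal [CompleteSpace E] {f g : ℂ → E}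
    (hf : DifferentiableOn ℂ f {z | 0 < z.re}) (hg : DifferentiableOn ℂ g {z | 0 < z.re})
    (hfg : ∀ r : ℝ, 0 < r → f r = g r) : EqOn f g {z | 0 < z.re} := by
  have hopen : IsOpen {z : ℂ | 0 < z.re} := isOpen_lt continuous_const continuous_re
  have haccum : Tendsto ((↑) : ℝ → ℂ) (𝓝[>] 1) (𝓝[≠] (1 : ℝ)) :=
    continuous_ofReal.continuousWithinAt.tendsto_nhdsWithin fun r hr =>
      ofReal_injective.ne (ne_of_gt hr)
  have hagree : ∀ᶠ r : ℝ in 𝓝[>] 1, f r = g r := by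
    filter_upwards [self_mem_nhdsWithin] with r hr using hfg r (zero_lt_one.trans hr)
  exact (hf.analyticOnNhd hopen).eqOn_of_preconnected_of_frequently_eq (hg.analyticOnNhd hopen)
    (convex_halfSpace_re_gt 0).isPreconnected (by simp) (haccum.frequently hagree.frequently)

theorem norm_ofReal_mul_cexp_neg_mul_le {δ t : ℝ} {w z : ℂ} (hδ : 0 < δ) (ht : 0 ≤ t)
    (hz : w.re + δ ≤ z.re) : ‖(t : ℂ) * cexp (-(z * t))‖ ≤ δ⁻¹ * ‖cexp (-(w * t))‖ := by
  simp only [norm_mul, norm_exp, neg_re, re_mul_ofReal, norm_real, Real.norm_of_nonneg ht]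
  have hlin : t ≤ δ⁻¹ * Real.exp (δ * t) := by
    rw [← div_eq_inv_mul, le_div_iff₀' hδ]
    linarith [Real.add_one_le_exp (δ * t)]
  calc t * Real.exp (-(z.re * t))
      ≤ δ⁻¹ * Real.exp (δ * t) * Real.exp (-((w.re + δ) * t)) := by gcongr
    _ = δ⁻¹ * Real.exp (-(w.re * t)) := by
      rw [mul_assoc, ← Real.exp_add]
      ring_nf

theorem aestronglyMeasurable_cexp_neg_mul_smul {f : ℝ → E} {w : ℂ} {μ : Measure ℝ}
    (hf : AEStronglyMeasurable (fun t : ℝ => cexp (-(w * t)) • f t) μ) (z : ℂ) :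
    AEStronglyMeasurable (fun t : ℝ => cexp (-(z * t)) • f t) μ := by
  have hshift : Continuous fun t : ℝ => cexp ((w - z) * t) := by fun_prop
  refine (hshift.aestronglyMeasurable.smul hf).congr (.of_forall fun t => ?_)
  simp only [Pi.smul_apply', smul_smul, ← Complex.exp_add]
  ring_nf

theorem integrableOn_cexp_neg_mul_smul_of_re_le {f : ℝ → E} {w z : ℂ}
    (hf : IntegrableOn (fun t : ℝ => cexp (-(w * t)) • f t) (Ioi 0)) (hz : w.re ≤ z.re) :
    IntegrableOn (fun t : ℝ => cexp (-(z * t)) • f t) (Ioi 0) := by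
  refine Integrable.mono hf (aestronglyMeasurable_cexp_neg_mul_smul hf.aestronglyMeasurable z) ?_
  filter_upwards [ae_restrict_mem measurableSet_Ioi] with t (ht : 0 < t)
  simp only [norm_smul, norm_exp, neg_re, re_mul_ofReal]
  gcongr

theorem differentiableAt_integral_cexp_neg_mul_smul {f : ℝ → E} {w z : ℂ}
    (hf : IntegrableOn (fun t : ℝ => cexp (-(w * t)) • f t) (Ioi 0)) (hz : w.re < z.re) :
    DifferentiableAt ℂ (fun u : ℂ => ∫ t in Ioi (0 : ℝ), cexp (-(u * t)) • f t) z := by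
  obtain ⟨m, hwm, hmz⟩ := exists_between hz
  have hmeas := aestronglyMeasurable_cexp_neg_mul_smul hf.aestronglyMeasurable
  have hderiv (t : ℝ) (u : ℂ) : HasDerivAt (fun u : ℂ => cexp (-(u * t)) • f t)
      (-(t : ℂ) • cexp (-(u * t)) • f t) u := by
    have hlin : HasDerivAt (fun u : ℂ => -(u * t)) (-t) u := (hasDerivAt_mul_const (t : ℂ)).neg
    simpa only [mul_comm _ (-(t : ℂ)), mul_smul] using hlin.cexp.smul_const (f t)
  refine (hasDerivAt_integral_of_dominated_loc_of_deriv_le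
    (μ := volume.restrict (Ioi 0)) (bound := fun t : ℝ => (m - w.re)⁻¹ * ‖cexp (-(w * t)) • f t‖)
    ((isOpen_lt continuous_const continuous_re).mem_nhds hmz) (.of_forall hmeas)
    (integrableOn_cexp_neg_mul_smul_of_re_le hf hz.le) ?_ ?_ (hf.norm.const_mul _)
    (.of_forall fun t u _ => hderiv t u)).2.differentiableAt
  · exact (by fun_prop : Continuous fun t : ℝ => -(t : ℂ)).aestronglyMeasurable.smul (hmeas z)
  · filter_upwards [ae_restrict_mem measurableSet_Ioi] with t (ht : 0 < t) u (hu : m < u.re)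
    have hre : w.re + (m - w.re) ≤ u.re := by linarith
    rw [neg_smul, norm_neg, smul_smul, norm_smul, norm_smul, ← mul_assoc]
    gcongr
    exact norm_ofReal_mul_cexp_neg_mul_le (sub_pos.mpr hwm) ht.le hre

end HalfPlane

section MellinExp

open Complex Asymptotics
open scoped Topology

variable {s z : ℂ}

theorem locallyIntegrableOn_cexp_neg_mul (z : ℂ) (S : Set ℝ) :
    LocallyIntegrableOn (fun t : ℝ => cexp (-(z * t))) S :=
  (by fun_prop : Continuous fun t : ℝ => cexp (-(z * t))).locallyIntegrable.locallyIntegrableOn S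

theorem cexp_neg_mul_isBigO_rpow_atTop (hz : 0 < z.re) (a : ℝ) :
    (fun t : ℝ => cexp (-(z * t))) =O[atTop] (· ^ a : ℝ → ℝ) := by
  rw [← isBigO_norm_left]
  simpa [norm_exp] using (isLittleO_exp_neg_mul_rpow_atTop hz a).isBigO

theorem cexp_neg_mul_isBigO_one_nhdsGT_zero (z : ℂ) :
    (fun t : ℝ => cexp (-(z * t))) =O[𝓝[>] 0] (fun _ => 1 : ℝ → ℝ) := by
  have hcont : Continuous fun t : ℝ => cexp (-(z * t)) := by fun_prop
  exact (hcont.continuousAt.mono_left nhdsWithin_le_nhds).isBigO_one ℝ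

theorem mellinConvergent_cexp_neg_mul (hz : 0 < z.re) (hs : 0 < s.re) :
    MellinConvergent (fun t : ℝ => cexp (-(z * t))) s :=
  mellinConvergent_of_isBigO_rpow (b := 0) (locallyIntegrableOn_cexp_neg_mul z _)
    (cexp_neg_mul_isBigO_rpow_atTop hz _) (lt_add_one _)
    (by simpa using cexp_neg_mul_isBigO_one_nhdsGT_zero z) hs

theorem mellin_cexp_neg_mul (hz : 0 < z.re) (hs : 0 < s.re) :
    mellin (fun t : ℝ => cexp (-(z * t))) s = z ^ (-s) * Gamma s := by
  refine eqOn_re_pos_of_eq_ofReal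
    (f := fun z => mellin (fun t : ℝ => cexp (-(z * t))) s) (g := fun z => z ^ (-s) * Gamma s)
    (fun w (hw : 0 < w.re) => ?_) (fun w hw => ?_) (fun r hr => ?_) hz
  · have hhalf : 0 < (w / 2).re ∧ (w / 2).re < w.re := by
      simp only [div_ofNat_re]
      constructor <;> linarith
    have hconv := mellinConvergent_cexp_neg_mul hhalf.1 hs
    simp only [MellinConvergent, smul_eq_mul, mul_comm ((_ : ℂ) ^ (s - 1))] at hconv
    simp only [mellin, smul_eq_mul, mul_comm ((_ : ℂ) ^ (s - 1))]
    exact (differentiableAt_integral_cexp_neg_mul_smul hconv hhalf.2).differentiableWithinAt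
  · exact ((differentiableAt_id.cpow_const (Or.inl hw)).mul_const _).differentiableWithinAt
  · have harg : (r : ℂ).arg ≠ Real.pi := by
      simpa [arg_ofReal_of_nonneg hr.le] using Real.pi_ne_zero.symm
    simp only [mellin, smul_eq_mul, integral_cpow_mul_exp_neg_mul_Ioi hs hr, one_div,
      inv_cpow _ _ harg, cpow_neg]

theorem hasMellin_log_smul_cexp_neg_mul (hz : 0 < z.re) (hs : 0 < s.re) :
    HasMellin (fun t : ℝ => Real.log t • cexp (-(z * t))) s
      (z ^ (-s) * (deriv Gamma s - Gamma s * log z)) := by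
  obtain ⟨hconv, hderiv⟩ := mellin_hasDerivAt_of_isBigO_rpow (b := 0)
    (locallyIntegrableOn_cexp_neg_mul z _) (cexp_neg_mul_isBigO_rpow_atTop hz _)
    (lt_add_one s.re) (by simpa using cexp_neg_mul_isBigO_one_nhdsGT_zero z) hs
  have hz0 : z ≠ 0 := by
    rintro rfl
    exact hz.ne rfl
  have hpole (m : ℕ) : s ≠ -m := by
    rintro rfl
    exact hs.not_ge (by simp)
  have hGamma : HasDerivAt Gamma (deriv Gamma s) s := (differentiableAt_Gamma s hpole).hasDerivAt
  have hclosed : HasDerivAt (fun s => z ^ (-s) * Gamma s)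
      (z ^ (-s) * log z * -1 * Gamma s + z ^ (-s) * deriv Gamma s) s :=
    ((hasDerivAt_neg s).const_cpow (Or.inl hz0)).mul hGamma
  have hmellin : mellin (fun t : ℝ => cexp (-(z * t))) =ᶠ[𝓝 s] fun s => z ^ (-s) * Gamma s := by
    filter_upwards [(isOpen_lt continuous_const continuous_re).mem_nhds hs] with u hu
      using mellin_cexp_neg_mul hz hu
  refine ⟨hconv, (hderiv.unique (hclosed.congr_of_eventuallyEq hmellin)).trans ?_⟩
  ring

theorem hasMellin_one_log_div_smul_cexp_neg_mul (hz : 0 < z.re) {c : ℝ} (hc : 0 < c) :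
    HasMellin (fun t : ℝ => Real.log (t / c) • cexp (-(z * t))) 1
      (-(Real.eulerMascheroniConstant + log (z * c)) / z) := by
  have hzc : 0 < (z * c).re := by
    rw [re_mul_ofReal]
    positivity
  have hc0 : (c : ℂ) ≠ 0 := ofReal_ne_zero.mpr hc.ne'
  have hscale : (fun t : ℝ => Real.log (t / c) • cexp (-(z * t))) =
      fun t => (fun u : ℝ => Real.log u • cexp (-(z * c * u))) (c⁻¹ * t) := by
    funext t
    push_cast
    rw [mul_assoc z, mul_inv_cancel_left₀ hc0, div_eq_inv_mul]
  obtain ⟨hconv, hval⟩ := hasMellin_log_smul_cexp_neg_mul (s := 1) hzc (by simp)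
  rw [hscale]
  refine ⟨(MellinConvergent.comp_mul_left (inv_pos.mpr hc)).mpr hconv, ?_⟩
  rw [mellin_comp_mul_left (fun u : ℝ => Real.log u • cexp (-(z * c * u))) 1 (inv_pos.mpr hc),
    hval, hasDerivAt_Gamma_one.deriv, Gamma_one, cpow_neg_one, cpow_neg_one, ofReal_inv, inv_inv,
    smul_eq_mul]
  field_simp
  ring

end MellinExp

section AbelSine

open Complex
open scoped Topology

variable {c ε Ω : ℝ}

theorem exp_neg_mul_log_div_mul_sin_eq_im (c ε Ω τ : ℝ) :
    Real.exp (-ε * τ) * Real.log (τ / c) * Real.sin (Ω * τ) =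
      (Real.log (τ / c) • cexp (-((ε - Ω * I) * τ))).im := by
  have hre : (-((ε - Ω * I) * τ)).re = -ε * τ := by simp
  have him : (-((ε - Ω * I) * τ)).im = Ω * τ := by simp
  rw [real_smul, im_ofReal_mul, exp_im, hre, him]
  ring

theorem integrableOn_exp_neg_mul_log_div_mul_sin (hc : 0 < c) (hε : 0 < ε) (Ω : ℝ) :
    IntegrableOn (fun τ => Real.exp (-ε * τ) * Real.log (τ / c) * Real.sin (Ω * τ)) (Ioi 0) := by
  have hconv :=
    (hasMellin_one_log_div_smul_cexp_neg_mul (z := ε - Ω * I) (by simpa using hε) hc).1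
  simp only [MellinConvergent, sub_self, cpow_zero, one_smul] at hconv
  simp only [exp_neg_mul_log_div_mul_sin_eq_im]
  exact Integrable.im hconv

theorem integral_exp_neg_mul_log_div_mul_sin (hc : 0 < c) (hε : 0 < ε) (Ω : ℝ) :
    ∫ τ in Ioi 0, Real.exp (-ε * τ) * Real.log (τ / c) * Real.sin (Ω * τ) =
      (-(Real.eulerMascheroniConstant + log ((ε - Ω * I) * c)) / (ε - Ω * I)).im := by
  obtain ⟨hconv, hval⟩ :=
    hasMellin_one_log_div_smul_cexp_neg_mul (z := ε - Ω * I) (by simpa using hε) hc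
  simp only [MellinConvergent, mellin, sub_self, cpow_zero, one_smul] at hconv hval
  simp only [exp_neg_mul_log_div_mul_sin_eq_im, ← hval]
  exact integral_im hconv

theorem log_neg_ofReal_mul_I {x : ℝ} (hx : 0 < x) :
    log (-(x * I)) = Real.log x - Real.pi / 2 * I := by
  rw [← mul_neg, log_ofReal_mul hx (neg_ne_zero.mpr I_ne_zero), log_neg_I]
  ring

theorem tendsto_integral_exp_neg_mul_log_div_mul_sin (hc : 0 < c) (hΩ : 0 < Ω) :
    Tendsto
      (fun ε => ∫ τ in Ioi 0, Real.exp (-ε * τ) * Real.log (τ / c) * Real.sin (Ω * τ))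
      (𝓝[>] 0) (𝓝 (-(Real.log (Ω * c) + Real.eulerMascheroniConstant) / Ω)) := by
  let transform (ε : ℝ) : ℂ :=
    -(Real.eulerMascheroniConstant + log ((ε - Ω * I) * c)) / (ε - Ω * I)
  have hcont : ContinuousAt transform 0 := by
    have hslit : (((0 : ℝ) : ℂ) - Ω * I) * c ∈ slitPlane :=
      Or.inr (by simp [hΩ.ne', hc.ne'])
    have hden : ((0 : ℝ) : ℂ) - Ω * I ≠ 0 := by simpa using hΩ.ne'
    have hlog : ContinuousAt (fun ε : ℝ => log ((ε - Ω * I) * c)) 0 :=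
      ContinuousAt.clog (by fun_prop) hslit
    exact ((continuousAt_const.add hlog).neg).div (by fun_prop) hden
  have hboundary : (transform 0).im =
      -(Real.log (Ω * c) + Real.eulerMascheroniConstant) / Ω := by
    have him (w : ℂ) : (w / (Ω * I)).im = -w.re / Ω := by
      simp [div_mul_eq_div_div, div_ofReal_re, neg_div]
    have hpoint : -(Ω * I) * (c : ℂ) = -((Ω * c : ℝ) * I) := by
      push_cast
      ring
    simp only [transform, ofReal_zero, zero_sub, neg_div_neg_eq]
    rw [hpoint, him, log_neg_ofReal_mul_I (mul_pos hΩ hc)]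
    simp [add_comm]
  rw [← hboundary]
  refine ((continuous_im.continuousAt.comp hcont).mono_left nhdsWithin_le_nhds).congr' ?_
  filter_upwards [self_mem_nhdsWithin] with ε hε
    using (integral_exp_neg_mul_log_div_mul_sin hc hε Ω).symm

end AbelSine

theorem deriv_mul_cos_sub_deriv_mul_cos (A φ Ω t τ : ℝ) :
    deriv (fun s : ℝ => A * Real.cos (Ω * s + φ)) (t - τ) -
        deriv (fun s : ℝ => A * Real.cos (Ω * s + φ)) (t + τ) =
      2 * (A * Real.cos (Ω * t + φ)) * Ω * Real.sin (Ω * τ) := by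
  have hderiv (x : ℝ) : deriv (fun s : ℝ => A * Real.cos (Ω * s + φ)) x =
      -(A * Ω * Real.sin (Ω * x + φ)) := by
    have hphase : HasDerivAt (fun s : ℝ => Ω * s + φ) Ω x := by
      simpa using ((hasDerivAt_id x).const_mul Ω).add_const φ
    rw [(hphase.cos.const_mul A).deriv]
    ring
  have hminus : Ω * (t - τ) + φ = (Ω * t + φ) - Ω * τ := by ring
  have hplus : Ω * (t + τ) + φ = (Ω * t + φ) + Ω * τ := by ring
  rw [hderiv, hderiv, hminus, hplus, Real.sin_sub, Real.sin_add (Ω * t + φ)]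
  ring

/-- Evaluation of the Hadamard partie-finie tail kernel on a sinusoid
`g(t) = A cos(Ω t + φ)`: the Abel-regularized value of
`∫₀^∞ log(τ/τ₀) (g'(t-τ) - g'(t+τ)) dτ` is `-2 g(t) (log(Ω τ₀) + γ)`. -/
theorem tail_kernel_on_sinusoid (A φ Ω τ₀ : ℝ) (hΩ : 0 < Ω) (hτ₀ : 0 < τ₀) :
    ∀ t : ℝ,
      (∀ ε : ℝ, 0 < ε →
        IntegrableOn
          (fun τ : ℝ => Real.exp (-ε * τ) * Real.log (τ / τ₀) *
            (deriv (fun s : ℝ => A * Real.cos (Ω * s + φ)) (t - τ) -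
             deriv (fun s : ℝ => A * Real.cos (Ω * s + φ)) (t + τ)))
          (Ioi 0) volume) ∧
      Tendsto
        (fun ε : ℝ =>
          ∫ τ in Ioi (0 : ℝ), Real.exp (-ε * τ) * Real.log (τ / τ₀) *
            (deriv (fun s : ℝ => A * Real.cos (Ω * s + φ)) (t - τ) -
             deriv (fun s : ℝ => A * Real.cos (Ω * s + φ)) (t + τ)))
        (nhdsWithin 0 (Ioi 0))
        (nhds (-2 * (A * Real.cos (Ω * t + φ)) *
          (Real.log (Ω * τ₀) + Real.eulerMascheroniConstant))) := by
  intro t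
  have hkernel (ε τ : ℝ) : Real.exp (-ε * τ) * Real.log (τ / τ₀) *
      (deriv (fun s : ℝ => A * Real.cos (Ω * s + φ)) (t - τ) -
        deriv (fun s : ℝ => A * Real.cos (Ω * s + φ)) (t + τ)) =
      2 * (A * Real.cos (Ω * t + φ)) * Ω *
        (Real.exp (-ε * τ) * Real.log (τ / τ₀) * Real.sin (Ω * τ)) := by
    rw [deriv_mul_cos_sub_deriv_mul_cos]
    ring
  simp only [hkernel, integral_const_mul]
  refine ⟨fun ε hε => (integrableOn_exp_neg_mul_log_div_mul_sin hτ₀ hε Ω).const_mul _, ?_⟩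
  convert (tendsto_integral_exp_neg_mul_log_div_mul_sin hτ₀ hΩ).const_mul
    (2 * (A * Real.cos (Ω * t + φ)) * Ω) using 2
  field_simp
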